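/- If a type-2 event occurs at time τ and the idle period immediately preceding τ has length at least s, then ζ(t) = s for every t between τ and the next loss of the nominal trajectory, and the first loss occurring after τ is a type-1 event. Consequently N_ℓ ≤ N₁, where N_ℓ is the number of lossy busy periods whose preceding idle period has length at least s and N₁ is the total number of type-1 events during [0, t_f]. -/

import Mathlib

/-! A single-server FCFS queue with deterministic service time `s`, buffer size `k`
(counting the job in service), driven by a finite list `as` of arrival times.
The state is the list of (arrival time, departure time) pairs of admitted jobs. -/

/-- Process one arrival `a`: it is admitted iff the number of jobs still in the
system just before `a` is less than `k`; its service starts when the server frees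
(the departure time of the previously admitted job) or at `a`, and lasts `s`. -/
noncomputable def qstep (s : ℝ) (k : ℕ) (jobs : List (ℝ × ℝ)) (a : ℝ) :
    List (ℝ × ℝ) :=
  if (jobs.filter (fun p => decide (a ≤ p.2))).length < k then
    jobs ++ [(a, max a (((jobs.getLast?).map Prod.snd).getD a) + s)]
  else jobs

/-- The admitted jobs (arrival, departure) after processing all arrivals. -/
noncomputable def qsim (s : ℝ) (k : ℕ) (as : List ℝ) : List (ℝ × ℝ) :=
  as.foldl (qstep s k) []

/-- The admitted jobs arrived strictly before time `t`. -/
noncomputable def jobsBefore (s : ℝ) (k : ℕ) (as : List ℝ) (t : ℝ) :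
    List (ℝ × ℝ) :=
  ((as.filter (fun b => decide (b < t)))).foldl (qstep s k) []

/-- `x(k,t)`: the number of jobs in the system at time `t` (right-continuous). -/
noncomputable def xq (s : ℝ) (k : ℕ) (as : List ℝ) (t : ℝ) : ℕ :=
  ((qsim s k as).filter (fun p => decide (p.1 ≤ t) && decide (t < p.2))).length

/-- `x(k,t⁻)`: the number of jobs in the system just before time `t`. -/
noncomputable def xqMinus (s : ℝ) (k : ℕ) (as : List ℝ) (t : ℝ) : ℕ :=
  ((qsim s k as).filter (fun p => decide (p.1 < t) && decide (t ≤ p.2))).length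

/-- `n(k)`: the number of jobs lost during the horizon. -/
noncomputable def nLost (s : ℝ) (k : ℕ) (as : List ℝ) : ℕ :=
  as.length - (qsim s k as).length

/-- A loss (of the trajectory with buffer size `k`) occurs at time `a`:
`a` is an arrival time and `x(k,a⁻) = k`. -/
noncomputable def isLoss (s : ℝ) (k : ℕ) (as : List ℝ) (a : ℝ) : Bool :=
  decide (a ∈ as) &&
    decide (((jobsBefore s k as a).filter (fun p => decide (a ≤ p.2))).length = k)

/-- The end time of the busy period of `x(k,·)` containing (or next following) `t`:
the first time `u ≥ t` at which the system is empty. -/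
noncomputable def busyEnd (s : ℝ) (k : ℕ) (as : List ℝ) (t : ℝ) : ℝ :=
  sInf {u : ℝ | t ≤ u ∧ xq s k as u = 0}

/-- One step of the state machine of Definition 1, acting on `(jobs, ψ, ζ)`.
At a type-2 event (arrival to an empty system), `ψ := 0` and
`ζ := min (t_b - τ_e + ζ) s`, with `τ_e` the end of the preceding busy period.
At a type-1 event (a loss with `ψ = 0` and `ζ > s - (t_a - t_0) ≥ 0`, where `t_0`
is the service-start time of the job in service), `ψ := 1` and `ζ := 0`. -/
noncomputable def pzstep (s : ℝ) (k : ℕ) (st : List (ℝ × ℝ) × Bool × ℝ) (a : ℝ) :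
    List (ℝ × ℝ) × Bool × ℝ :=
  let present := st.1.filter (fun p => decide (a ≤ p.2))
  if present.length = 0 then
    -- type-2 event
    (qstep s k st.1 a, false,
      min (a - (((st.1.getLast?).map Prod.snd).getD 0) + st.2.2) s)
  else if present.length < k then
    (qstep s k st.1 a, st.2.1, st.2.2)
  else
    -- a loss: possibly a type-1 event
    let t0 := ((present.head?).map (fun p => p.2 - s)).getD a
    if st.2.1 = false ∧ s - (a - t0) < st.2.2 ∧ 0 ≤ s - (a - t0) then
      (qstep s k st.1 a, true, 0)
    else
      (qstep s k st.1 a, st.2.1, st.2.2)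

/-- The state `(jobs, ψ, ζ)` just before time `t` (initialized `ψ = 0`, `ζ = s`). -/
noncomputable def pzBefore (s : ℝ) (k : ℕ) (as : List ℝ) (t : ℝ) :
    List (ℝ × ℝ) × Bool × ℝ :=
  ((as.filter (fun b => decide (b < t)))).foldl (pzstep s k) ([], false, s)

/-- `ζ(t)`: the value of the auxiliary variable `ζ` at time `t`. -/
noncomputable def zetaAt (s : ℝ) (k : ℕ) (as : List ℝ) (t : ℝ) : ℝ :=
  (((as.filter (fun b => decide (b ≤ t)))).foldl (pzstep s k) ([], false, s)).2.2

/-- A type-1 event occurs at time `a`: `a` is an arrival time, `x(k,a⁻) = k`,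
`ψ = 0`, and `ζ > s - (a - t_0) ≥ 0` where `t_0` is the service-start time of the
job in service at time `a`. -/
noncomputable def isType1 (s : ℝ) (k : ℕ) (as : List ℝ) (a : ℝ) : Bool :=
  let st := pzBefore s k as a
  let present := st.1.filter (fun p => decide (a ≤ p.2))
  let t0 := ((present.head?).map (fun p => p.2 - s)).getD a
  decide (a ∈ as) && decide (present.length = k) && (!st.2.1) &&
    decide (s - (a - t0) < st.2.2) && decide (0 ≤ s - (a - t0))

/-- A type-2 event occurs at time `a`: `a` is an arrival time and `x(k,a⁻) = 0`. -/
noncomputable def isType2 (s : ℝ) (k : ℕ) (as : List ℝ) (a : ℝ) : Bool :=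
  decide (a ∈ as) &&
    decide (((jobsBefore s k as a).filter (fun p => decide (a ≤ p.2))).length = 0)

/-- The departure time ending the busy period preceding `t` (i.e. the start of the
idle period preceding `t`); `0` if no job departed before `t`. -/
noncomputable def prevDep (s : ℝ) (k : ℕ) (as : List ℝ) (t : ℝ) : ℝ :=
  ((((jobsBefore s k as t)).getLast?).map Prod.snd).getD 0

/-- `b` is the start of a lossy busy period of `x(k,·)`: a type-2 event such that
some loss occurs during the busy period `[b, busyEnd b)` begun at `b`. -/
noncomputable def startsLossyBP (s : ℝ) (k : ℕ) (as : List ℝ) (b : ℝ) : Bool :=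
  isType2 s k as b &&
    as.any (fun a =>
      isLoss s k as a && decide (b ≤ a) && decide (a < busyEnd s k as b))

/-- `N₁`: the number of type-1 events. -/
noncomputable def numType1 (s : ℝ) (k : ℕ) (as : List ℝ) : ℕ :=
  (as.filter (isType1 s k as)).length

/-- `N`: the number of lossy busy periods. -/
noncomputable def numLossyBP (s : ℝ) (k : ℕ) (as : List ℝ) : ℕ :=
  (as.filter (startsLossyBP s k as)).length

/-- `N_s`: the number of lossy busy periods whose preceding idle period is shorter
than `s`. -/
noncomputable def numLossyBPShort (s : ℝ) (k : ℕ) (as : List ℝ) : ℕ :=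
  (as.filter (fun b =>
    startsLossyBP s k as b && decide (b - prevDep s k as b < s))).length

/-- `N_ℓ`: the number of lossy busy periods whose preceding idle period has length
at least `s`. -/
noncomputable def numLossyBPLong (s : ℝ) (k : ℕ) (as : List ℝ) : ℕ :=
  (as.filter (fun b =>
    startsLossyBP s k as b && decide (s ≤ b - prevDep s k as b))).length

/-!
Since `ζ ≥ 0` throughout, a long idle period resets the state machine to `ψ = 0`, `ζ = s`. This
state is kept at every later admission, because the idle gap added at a type-2 event is
nonnegative and `ζ` is capped at `s`. At the first loss the type-1 condition
`ζ > s - (a - t₀) ≥ 0` therefore reads `t₀ < a ≤ t₀ + s`: the job in service has started before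
the arrival and has not yet left. Each lossy busy period preceded by a long idle period thus
contains a type-1 event, and distinct busy periods are disjoint.
-/

section SortedLists

variable {α : Type*} [LinearOrder α] {l : List α} {p : α → Prop} [DecidablePred p]

theorem filter_append_filter_not_of_sortedLT (hl : l.SortedLT) (hp : IsLowerSet {a | p a}) :
    l.filter (fun a => decide (p a)) ++ l.filter (fun a => !decide (p a)) = l := by
  induction l with
  | nil => rfl
  | cons x l ih =>
    obtain ⟨hx, hl'⟩ := List.pairwise_cons.1 hl.pairwise
    by_cases hpx : p x
    · simp [hpx, ih hl'.sortedLT]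
    · have hnot : ∀ a ∈ l, ¬ p a := fun a ha hpa => hpx (hp (hx a ha).le hpa)
      have hnil : l.filter (fun a => decide (p a)) = [] :=
        List.filter_eq_nil_iff.2 fun a ha => by simpa using hnot a ha
      have hself : l.filter (fun a => !decide (p a)) = l :=
        List.filter_eq_self.2 fun a ha => by simpa using hnot a ha
      simp [hpx, hnil, hself]

theorem filter_isPrefix_of_sortedLT (hl : l.SortedLT) (hp : IsLowerSet {a | p a}) :
    l.filter (fun a => decide (p a)) <+: l :=
  ⟨_, filter_append_filter_not_of_sortedLT hl hp⟩

theorem filter_lt_eq_of_concat_isPrefix {l' : List α} {c : α} (hl : l.SortedLT)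
    (hpre : l' ++ [c] <+: l) : l.filter (fun b => decide (b < c)) = l' := by
  obtain ⟨r, rfl⟩ := hpre
  rw [List.append_assoc, List.singleton_append] at hl ⊢
  obtain ⟨-, hr, hl'⟩ := List.pairwise_append.1 hl.pairwise
  have hself : l'.filter (fun b => decide (b < c)) = l' :=
    List.filter_eq_self.2 fun b hb => by simpa using hl' b hb c List.mem_cons_self
  have hnil : r.filter (fun b => decide (b < c)) = [] :=
    List.filter_eq_nil_iff.2 fun b hb => by simpa using (List.rel_of_pairwise_cons hr hb).le
  simp [hself, hnil]

end SortedLists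

section Queue

variable {s : ℝ} {k : ℕ} {J : List (ℝ × ℝ)} {l : List ℝ} {a c : ℝ}

/-- The jobs of `J` that are in the system just before time `a`; a job departing exactly at `a`
still counts, so the length of this list is `x(k,a⁻)`. -/
noncomputable def present (J : List (ℝ × ℝ)) (a : ℝ) : List (ℝ × ℝ) :=
  J.filter fun p => decide (a ≤ p.2)

/-- The departure time of the last job of `J`, i.e. the time at which the server becomes free,
with default value `d` when no job has been admitted. -/
noncomputable def lastDepartureD (J : List (ℝ × ℝ)) (d : ℝ) : ℝ :=
  (J.getLast?.map Prod.snd).getD d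

theorem mem_present {p : ℝ × ℝ} : p ∈ present J a ↔ p ∈ J ∧ a ≤ p.2 := by
  simp [present]

theorem present_eq_nil_iff : present J a = [] ↔ ∀ p ∈ J, p.2 < a := by
  simp [present]

theorem present_append (J J' : List (ℝ × ℝ)) (a : ℝ) :
    present (J ++ J') a = present J a ++ present J' a :=
  List.filter_append J J'

theorem length_present_antitone (J : List (ℝ × ℝ)) :
    Antitone fun a => (present J a).length := fun c a hca =>
  (List.monotone_filter_right J fun p hp => by
    simpa using hca.trans (of_decide_eq_true hp)).length_le

theorem lastDepartureD_lt_of_present_eq_nil {d : ℝ} (hd : d < a) (h : present J a = []) :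
    lastDepartureD J d < a := by
  unfold lastDepartureD
  cases hlast : J.getLast? with
  | none => exact hd
  | some p => exact present_eq_nil_iff.1 h p (List.mem_of_getLast? hlast)

theorem qstep_of_lt (h : (present J a).length < k) :
    qstep s k J a = J ++ [(a, max a (lastDepartureD J a) + s)] :=
  if_pos h

theorem qstep_of_le (h : k ≤ (present J a).length) : qstep s k J a = J :=
  if_neg h.not_gt

theorem qsim_concat (l : List ℝ) (a : ℝ) :
    qsim s k (l ++ [a]) = qstep s k (qsim s k l) a := by
  simp [qsim]

theorem mem_foldl_qstep {p : ℝ × ℝ} (h : p ∈ l.foldl (qstep s k) J) : p ∈ J ∨ p.1 ∈ l := by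
  induction l using List.reverseRecOn with
  | nil => exact Or.inl h
  | append_singleton l a ih =>
    rw [List.foldl_concat] at h
    rcases lt_or_ge (present (l.foldl (qstep s k) J) a).length k with hlt | hge
    · rw [qstep_of_lt hlt, List.mem_append, List.mem_singleton] at h
      rcases h with h | rfl
      · exact (ih h).imp_right (List.mem_append_left _)
      · simp
    · rw [qstep_of_le hge] at h
      exact (ih h).imp_right (List.mem_append_left _)

theorem length_present_qstep_le (hca : c ≤ a) (h : (present J c).length ≤ k) :
    (present (qstep s k J c) a).length ≤ k := by
  have hle : (present J a).length ≤ (present J c).length := length_present_antitone J hca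
  rcases h.lt_or_eq with hlt | heq
  · have hnew : (present [(c, max c (lastDepartureD J c) + s)] a).length ≤ 1 :=
      List.length_filter_le _ _
    rw [qstep_of_lt hlt, present_append, List.length_append]
    lia
  · rw [qstep_of_le heq.ge]
    exact hle.trans h

theorem length_present_qsim_le (hl : (l ++ [a]).Pairwise (· ≤ ·)) :
    (present (qsim s k l) a).length ≤ k := by
  induction l using List.reverseRecOn generalizing a with
  | nil => simp [qsim, present]
  | append_singleton l c ih =>
    obtain ⟨hlc, -, hca⟩ := List.pairwise_append.1 hl
    rw [qsim_concat]
    exact length_present_qstep_le (hca c (by simp) a (by simp)) (ih hlc)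

-- If the job admitted at `c` heads the list, its predecessor has left before `a`, so its service
-- starts at the later of two times that both precede `a`.
theorem start_lt_of_mem_head?_present_qstep (hca : c < a)
    (h : ∀ p ∈ (present J a).head?, p.2 - s < a) :
    ∀ p ∈ (present (qstep s k J c) a).head?, p.2 - s < a := by
  intro p hp
  rcases lt_or_ge (present J c).length k with hlt | hge
  · rw [qstep_of_lt hlt, present_append] at hp
    rcases eq_or_ne (present J a) [] with hnil | hne
    · rw [hnil, List.nil_append] at hp
      obtain ⟨hmem, -⟩ := mem_present.1 (List.mem_of_mem_head? hp)
      rw [List.mem_singleton.1 hmem, add_sub_cancel_right]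
      exact max_lt hca (lastDepartureD_lt_of_present_eq_nil hca hnil)
    · rw [List.head?_append_of_ne_nil _ hne] at hp
      exact h p hp
  · rw [qstep_of_le hge] at hp
    exact h p hp

theorem start_lt_of_mem_head?_present_qsim (hl : ∀ b ∈ l, b < a) :
    ∀ p ∈ (present (qsim s k l) a).head?, p.2 - s < a := by
  induction l using List.reverseRecOn with
  | nil => simp [qsim, present]
  | append_singleton l c ih =>
    rw [qsim_concat]
    exact start_lt_of_mem_head?_present_qstep (hl c (by simp)) (ih fun b hb => hl b (by simp [hb]))

end Queue

section StateMachine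

variable {s : ℝ} {k : ℕ} {st : List (ℝ × ℝ) × Bool × ℝ} {l : List ℝ} {a : ℝ}

/-- The state `(jobs, ψ, ζ)` after processing all the arrivals in `l`, started from the empty
system with `ψ = 0` and `ζ = s`. -/
noncomputable def pzsim (s : ℝ) (k : ℕ) (l : List ℝ) : List (ℝ × ℝ) × Bool × ℝ :=
  l.foldl (pzstep s k) ([], false, s)

theorem pzsim_concat (l : List ℝ) (a : ℝ) :
    pzsim s k (l ++ [a]) = pzstep s k (pzsim s k l) a := by
  simp [pzsim]

theorem pzstep_fst (st : List (ℝ × ℝ) × Bool × ℝ) (a : ℝ) :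
    (pzstep s k st a).1 = qstep s k st.1 a := by
  unfold pzstep
  dsimp only
  split_ifs <;> rfl

theorem pzsim_fst (l : List ℝ) : (pzsim s k l).1 = qsim s k l := by
  induction l using List.reverseRecOn with
  | nil => rfl
  | append_singleton l a ih => rw [pzsim_concat, pzstep_fst, ih, qsim_concat]

theorem pzstep_snd_of_present_eq_nil (h : present st.1 a = []) :
    (pzstep s k st a).2 = (false, min (a - lastDepartureD st.1 0 + st.2.2) s) :=
  congrArg Prod.snd (if_pos (List.length_eq_zero_iff.2 h))

theorem pzstep_snd_of_length_present_lt (hne : present st.1 a ≠ [])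
    (hlt : (present st.1 a).length < k) : (pzstep s k st a).2 = st.2 := by
  have hstep : pzstep s k st a = (qstep s k st.1 a, st.2) :=
    (if_neg (mt List.length_eq_zero_iff.1 hne)).trans (if_pos hlt)
  rw [hstep]

theorem pzstep_snd_snd_eq_or_eq_zero (hne : present st.1 a ≠ []) :
    (pzstep s k st a).2.2 = st.2.2 ∨ (pzstep s k st a).2.2 = 0 := by
  have hlen : (st.1.filter fun p => decide (a ≤ p.2)).length ≠ 0 :=
    mt List.length_eq_zero_iff.1 hne
  unfold pzstep
  dsimp only
  rw [if_neg hlen]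
  split_ifs <;> simp

theorem pzstep_snd_snd_nonneg (hs : 0 ≤ s) (ha : 0 < a) (hζ : 0 ≤ st.2.2) :
    0 ≤ (pzstep s k st a).2.2 := by
  rcases eq_or_ne (present st.1 a) [] with hnil | hne
  · have hdep := lastDepartureD_lt_of_present_eq_nil ha hnil
    rw [pzstep_snd_of_present_eq_nil hnil]
    exact le_min (by linarith) hs
  · rcases pzstep_snd_snd_eq_or_eq_zero hne with h | h <;> rw [h]
    exact hζ

theorem pzsim_snd_snd_nonneg (hs : 0 ≤ s) (hl : ∀ b ∈ l, 0 < b) : 0 ≤ (pzsim s k l).2.2 := by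
  induction l using List.reverseRecOn with
  | nil => exact hs
  | append_singleton l a ih =>
    rw [pzsim_concat]
    exact pzstep_snd_snd_nonneg hs (hl a (by simp)) (ih fun b hb => hl b (by simp [hb]))

theorem pzstep_snd_of_long_idle (hnil : present st.1 a = [])
    (hidle : s ≤ a - lastDepartureD st.1 0) (hζ : 0 ≤ st.2.2) :
    (pzstep s k st a).2 = (false, s) := by
  rw [pzstep_snd_of_present_eq_nil hnil, min_eq_right (by linarith)]

theorem pzstep_snd_of_snd_eq (ha : 0 < a) (hlt : (present st.1 a).length < k)
    (h : st.2 = (false, s)) : (pzstep s k st a).2 = (false, s) := by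
  rcases eq_or_ne (present st.1 a) [] with hnil | hne
  · have hdep := lastDepartureD_lt_of_present_eq_nil ha hnil
    rw [pzstep_snd_of_present_eq_nil hnil, h, min_eq_right (by linarith)]
  · rw [pzstep_snd_of_length_present_lt hne hlt, h]

end StateMachine

section Events

variable {s : ℝ} {k : ℕ} {as : List ℝ} {a c τ : ℝ}

/-- A type-2 event occurs at `τ` and the idle period it terminates has length at least `s`. -/
def EndsLongIdle (s : ℝ) (k : ℕ) (as : List ℝ) (τ : ℝ) : Prop :=
  isType2 s k as τ = true ∧ s ≤ τ - prevDep s k as τ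

/-- The times after `τ` at which a job is lost; the next loss after `τ` is the least element. -/
def lossesAfter (s : ℝ) (k : ℕ) (as : List ℝ) (τ : ℝ) : Set ℝ :=
  {a | isLoss s k as a = true ∧ τ < a}

theorem isLoss_iff :
    isLoss s k as a = true ↔ a ∈ as ∧ (present (jobsBefore s k as a) a).length = k := by
  simp [isLoss, present]

theorem isType2_iff :
    isType2 s k as a = true ↔ a ∈ as ∧ present (jobsBefore s k as a) a = [] := by
  simp [isType2, present]

theorem finite_lossesAfter : (lossesAfter s k as τ).Finite :=
  as.finite_toSet.subset fun _ ha => (isLoss_iff.1 ha.1).1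

theorem jobsBefore_eq_qsim_of_concat_isPrefix (has : as.SortedLT) {l : List ℝ}
    (hl : l ++ [c] <+: as) : jobsBefore s k as c = qsim s k l := by
  rw [jobsBefore, filter_lt_eq_of_concat_isPrefix has hl, qsim]

theorem length_present_lt_of_not_isLoss (has : as.SortedLT) (ha : a ∈ as)
    (h : ¬ isLoss s k as a = true) : (present (jobsBefore s k as a) a).length < k := by
  refine lt_of_le_of_ne (length_present_qsim_le ?_) fun hk => h (isLoss_iff.2 ⟨ha, hk⟩)
  refine List.pairwise_append.2 ⟨(has.sortedLE.pairwise).filter _, by simp, ?_⟩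
  simpa using fun b _ hb => hb.le

theorem pzsim_snd_of_endsLongIdle (hs : 0 ≤ s) (has : as.SortedLT) (hpos : ∀ b ∈ as, 0 < b)
    (hτ : EndsLongIdle s k as τ) {l : List ℝ} (hl : l <+: as) (hmem : τ ∈ l)
    (hloss : ∀ b ∈ l, b ∉ lossesAfter s k as τ) : (pzsim s k l).2 = (false, s) := by
  induction l using List.reverseRecOn with
  | nil => simp at hmem
  | append_singleton l c ih =>
    have hlas : l <+: as := (List.prefix_append l [c]).trans hl
    have hc : c ∈ as := hl.subset (by simp)
    have hjobs : (pzsim s k l).1 = jobsBefore s k as c := by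
      rw [pzsim_fst, jobsBefore_eq_qsim_of_concat_isPrefix has hl]
    rw [pzsim_concat]
    rcases eq_or_ne τ c with rfl | hne
    · have hζ : 0 ≤ (pzsim s k l).2.2 :=
        pzsim_snd_snd_nonneg hs fun b hb => hpos b (hlas.subset hb)
      have hnil := (isType2_iff.1 hτ.1).2
      exact pzstep_snd_of_long_idle (hjobs ▸ hnil) (hjobs ▸ hτ.2) hζ
    · have hτl : τ ∈ l := by simpa [hne] using hmem
      have hτc : τ < c :=
        (List.pairwise_append.1 (has.pairwise.sublist hl.sublist)).2.2 τ hτl c (by simp)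
      have hlt := length_present_lt_of_not_isLoss has hc fun h => hloss c (by simp) ⟨h, hτc⟩
      exact pzstep_snd_of_snd_eq (hpos c hc) (hjobs ▸ hlt)
        (ih hlas hτl fun b hb => hloss b (by simp [hb]))

theorem zetaAt_eq_of_endsLongIdle (hs : 0 ≤ s) (has : as.SortedLT) (hpos : ∀ b ∈ as, 0 < b)
    (hτ : EndsLongIdle s k as τ) {t : ℝ} (ht : τ ≤ t) (hloss : ∀ b ∈ lossesAfter s k as τ, t < b) :
    zetaAt s k as t = s := by
  have hpre : as.filter (fun b => decide (b ≤ t)) <+: as :=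
    filter_isPrefix_of_sortedLT has (isLowerSet_Iic t)
  have hstate := pzsim_snd_of_endsLongIdle hs has hpos hτ hpre
    (by simp [(isType2_iff.1 hτ.1).1, ht])
    fun b hb hb' => (hloss b hb').not_ge (by simpa using List.of_mem_filter hb)
  exact congrArg Prod.snd hstate

theorem pzBefore_snd_of_endsLongIdle (hs : 0 ≤ s) (has : as.SortedLT) (hpos : ∀ b ∈ as, 0 < b)
    (hτ : EndsLongIdle s k as τ) {t : ℝ} (ht : τ < t) (hloss : ∀ b ∈ lossesAfter s k as τ, t ≤ b) :
    (pzBefore s k as t).2 = (false, s) := by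
  have hpre : as.filter (fun b => decide (b < t)) <+: as :=
    filter_isPrefix_of_sortedLT has (isLowerSet_Iio t)
  exact pzsim_snd_of_endsLongIdle hs has hpos hτ hpre
    (by simp [(isType2_iff.1 hτ.1).1, ht])
    fun b hb hb' => (hloss b hb').not_gt (by simpa using List.of_mem_filter hb)

theorem isType1_of_isLoss (hk : 1 ≤ k) (hloss : isLoss s k as a = true)
    (hstate : (pzBefore s k as a).2 = (false, s)) : isType1 s k as a = true := by
  obtain ⟨ha, hlen⟩ := isLoss_iff.1 hloss
  have hjobs : (pzBefore s k as a).1 = jobsBefore s k as a := pzsim_fst _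
  have hne : present (jobsBefore s k as a) a ≠ [] := List.length_pos_iff.1 (by lia)
  obtain ⟨p, hp⟩ : ∃ p, (present (jobsBefore s k as a) a).head? = some p :=
    ⟨_, List.head?_eq_some_head hne⟩
  have hstart : p.2 - s < a := start_lt_of_mem_head?_present_qsim (by simp) p hp
  have hpresent : a ≤ p.2 := (mem_present.1 (List.mem_of_mem_head? hp)).2
  unfold present at hlen hp
  simp only [isType1, hjobs, hstate, ha, hlen, hp, Option.map_some, Option.getD_some,
    Bool.not_false, Bool.and_eq_true, decide_eq_true_eq, true_and]
  constructor <;> linarith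

theorem isType1_of_isLeast_lossesAfter (hs : 0 ≤ s) (hk : 1 ≤ k) (has : as.SortedLT)
    (hpos : ∀ b ∈ as, 0 < b) (hτ : EndsLongIdle s k as τ)
    (ha : IsLeast (lossesAfter s k as τ) a) : isType1 s k as a = true :=
  isType1_of_isLoss hk ha.1.1 (pzBefore_snd_of_endsLongIdle hs has hpos hτ ha.1.2 ha.2)

end Events

section BusyPeriods

variable {s : ℝ} {k : ℕ} {as : List ℝ} {b c : ℝ}

theorem mem_jobsBefore_of_mem_qsim (has : as.SortedLT) {p : ℝ × ℝ} (hp : p ∈ qsim s k as)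
    (hpc : p.1 < c) : p ∈ jobsBefore s k as c := by
  rw [qsim, ← filter_append_filter_not_of_sortedLT has (isLowerSet_Iio c), List.foldl_append] at hp
  exact (mem_foldl_qstep hp).resolve_right fun h =>
    hpc.not_ge (by simpa using List.of_mem_filter h)

theorem xq_eq_zero_of_jobsBefore (has : as.SortedLT) {u : ℝ} (huc : u < c)
    (h : ∀ p ∈ jobsBefore s k as c, p.2 ≤ u) : xq s k as u = 0 := by
  simp only [xq, List.length_eq_zero_iff, List.filter_eq_nil_iff, Bool.and_eq_true,
    decide_eq_true_eq, not_and, not_lt]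
  exact fun p hp hpu => h p (mem_jobsBefore_of_mem_qsim has hp (hpu.trans_lt huc))

theorem busyEnd_le_of_xq_eq_zero {t u : ℝ} (htu : t ≤ u) (hu : xq s k as u = 0) :
    busyEnd s k as t ≤ u :=
  csInf_le ⟨t, fun _ hv => hv.1⟩ ⟨htu, hu⟩

-- The system is already empty at the later of `b` and the last departure before `c`, and both
-- precede `c`.
theorem busyEnd_le_of_isType2 (has : as.SortedLT) (hc : isType2 s k as c = true) (hbc : b < c) :
    busyEnd s k as b ≤ c := by
  have hdep := present_eq_nil_iff.1 (isType2_iff.1 hc).2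
  obtain ⟨u, hu, hmax⟩ := Finset.exists_max_image
    (insert b ((jobsBefore s k as c).map Prod.snd).toFinset) id (Finset.insert_nonempty _ _)
  have huc : u < c := by
    rcases Finset.mem_insert.1 hu with rfl | hu
    · exact hbc
    · obtain ⟨p, hp, rfl⟩ := List.mem_map.1 (List.mem_toFinset.1 hu)
      exact hdep p hp
  have hempty : xq s k as u = 0 := xq_eq_zero_of_jobsBefore has huc fun p hp =>
    hmax p.2 (Finset.mem_insert_of_mem (List.mem_toFinset.2 (List.mem_map_of_mem hp)))
  exact (busyEnd_le_of_xq_eq_zero (hmax b (Finset.mem_insert_self _ _)) hempty).trans huc.le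

theorem pairwiseDisjoint_busyPeriods (has : as.SortedLT) :
    {b | isType2 s k as b = true}.PairwiseDisjoint fun b => Set.Ico b (busyEnd s k as b) := by
  intro b hb c hc hne
  refine Set.disjoint_left.2 fun a hab hac => ?_
  rcases hne.lt_or_gt with h | h
  · exact (hab.2.trans_le (busyEnd_le_of_isType2 has hc h)).not_ge hac.1
  · exact (hac.2.trans_le (busyEnd_le_of_isType2 has hb h)).not_ge hab.1

theorem exists_isType1_of_startsLossyBP (hs : 0 ≤ s) (hk : 1 ≤ k) (has : as.SortedLT)
    (hpos : ∀ b ∈ as, 0 < b) (hlossy : startsLossyBP s k as b = true)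
    (hidle : s ≤ b - prevDep s k as b) :
    ∃ a ∈ as, isType1 s k as a = true ∧ a ∈ Set.Ico b (busyEnd s k as b) := by
  simp only [startsLossyBP, Bool.and_eq_true, decide_eq_true_eq, List.any_eq_true] at hlossy
  obtain ⟨h2, a₀, -, ⟨hloss₀, hba₀⟩, hend⟩ := hlossy
  have hne : b ≠ a₀ := by
    rintro rfl
    have hlen := (isLoss_iff.1 hloss₀).2
    rw [(isType2_iff.1 h2).2, List.length_nil] at hlen
    lia
  have hmem₀ : a₀ ∈ lossesAfter s k as b := ⟨hloss₀, hba₀.lt_of_ne hne⟩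
  obtain ⟨a, ha, hmin⟩ := Set.exists_min_image _ id finite_lossesAfter ⟨a₀, hmem₀⟩
  exact ⟨a, (isLoss_iff.1 ha.1).1,
    isType1_of_isLeast_lossesAfter hs hk has hpos ⟨h2, hidle⟩ ⟨ha, hmin⟩,
    ha.2.le, (hmin a₀ hmem₀).trans_lt hend⟩

theorem numLossyBPLong_le_numType1 (hs : 0 ≤ s) (hk : 1 ≤ k) (has : as.SortedLT)
    (hpos : ∀ b ∈ as, 0 < b) : numLossyBPLong s k as ≤ numType1 s k as := by
  unfold numLossyBPLong numType1
  rw [← List.toFinset_card_of_nodup (has.nodup.filter _),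
    ← List.toFinset_card_of_nodup (has.nodup.filter _)]
  refine Finset.card_le_card_of_forall_subsingleton
    (fun b a => a ∈ Set.Ico b (busyEnd s k as b)) (fun b hb => ?_) fun a _ b hb c hc => ?_
  · simp only [List.mem_toFinset, List.mem_filter, Bool.and_eq_true, decide_eq_true_eq] at hb ⊢
    obtain ⟨a, ha, h1, hab⟩ := exists_isType1_of_startsLossyBP hs hk has hpos hb.2.1 hb.2.2
    exact ⟨a, ⟨ha, h1⟩, hab⟩
  · simp only [Set.mem_ofPred_eq, List.mem_toFinset, List.mem_filter, startsLossyBP,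
      Bool.and_eq_true] at hb hc
    exact (pairwiseDisjoint_busyPeriods has).elim_set hb.1.2.1.1 hc.1.2.1.1 a hb.2 hc.2

end BusyPeriods

/-- if a type-2 event occurs at `τ` and the preceding idle period has
length at least `s`, then `ζ(t) = s` for every `t ≥ τ` up to the next loss, and
the first loss after `τ` is a type-1 event; consequently `N_ℓ ≤ N₁`. -/
theorem type2_event_with_long_idle (s tf : ℝ) (k : ℕ) (as : List ℝ)
    (hs : 0 < s) (hk : 1 ≤ k) (hinc : as.Chain' (· < ·))
    (hrange : ∀ a ∈ as, 0 < a ∧ a < tf)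
    (τ : ℝ) (h2 : isType2 s k as τ = true)
    (hidle : s ≤ τ - prevDep s k as τ) :
    (∀ t, τ ≤ t → (∀ a ∈ as, isLoss s k as a = true → ¬(τ < a ∧ a ≤ t)) →
      zetaAt s k as t = s) ∧
    (∀ a ∈ as, isLoss s k as a = true → τ < a →
      (∀ a' ∈ as, isLoss s k as a' = true → τ < a' → a ≤ a') →
      isType1 s k as a = true) ∧
    numLossyBPLong s k as ≤ numType1 s k as := by
  have has : as.SortedLT := List.sortedLT_iff_isChain.2 hinc
  have hpos : ∀ b ∈ as, 0 < b := fun b hb => (hrange b hb).1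
  have hτ : EndsLongIdle s k as τ := ⟨h2, hidle⟩
  refine ⟨fun t ht hno => ?_, fun a _ hloss hτa hfirst => ?_, ?_⟩
  · have hafter : ∀ b ∈ lossesAfter s k as τ, t < b := fun b hb =>
      not_le.1 fun hbt => hno b (isLoss_iff.1 hb.1).1 hb.1 ⟨hb.2, hbt⟩
    exact zetaAt_eq_of_endsLongIdle hs.le has hpos hτ ht hafter
  · have hleast : IsLeast (lossesAfter s k as τ) a :=
      ⟨⟨hloss, hτa⟩, fun b hb => hfirst b (isLoss_iff.1 hb.1).1 hb.1 hb.2⟩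
    exact isType1_of_isLeast_lossesAfter hs.le hk has hpos hτ hleast
  · exact numLossyBPLong_le_numType1 hs.le hk has hpos
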